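/- arXiv:1609.05966 — 3 statements merged into one kernel-verified Lean document; each statement's English description precedes it below -/
import Mathlib

section
/- Let u ∈ ℝ^m. Then u belongs to the aggregate flexibility P = P¹ ⊎ P² ⊎ … ⊎ P^N (the Minkowski sum of the individual admissible sets) if and only if for every subset α ⊆ {1,…,N} and every subset β ⊆ {1,…,m}, one has min{ ∑_{i∈α} Ē^i − ∑_{t∈β} u_t , ∑_{t∈β^c} u_t − ∑_{i∈α^c} E̲^i } ≥ − ∑_{i∈α^c} |β ∩ A^i| · p^i, where α^c and β^c denote the complements of α in {1,…,N} and of β in {1,…,m}, and |β ∩ A^i| is the cardinality of β ∩ A^i. -/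
open Finset

/-!
Necessity is summation of the elementary bounds on each `v i`.  For sufficiency, pick among all
`v ∈ ∏ i, P i` (a nonempty compact set) one that minimises the squared Euclidean norm of the
residual `r = u - ∑ i, v i`.  First-order optimality says that each `v i` maximises the linear
functional `⟨r, ·⟩` over `P i` (`inner_le_of_minimal`).

For a single load, a maximiser of `⟨c, ·⟩` is tight on the two sign sets of `c`, by an exchange
argument (`exchange`): its energy on `β = {c > 0}` equals either the upper bound `Ehi` or the full
capacity `|β ∩ A| p` (`sum_pos_part_tight`), and its energy on `γ = {c < 0}` equals either `0` or
`Elo - |γᶜ ∩ A| p` (`sum_neg_part_tight`).  Taking for `α` the set of loads in the first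
alternative, the inequality for `(α, β)` reads `∑_β u ≤ ∑_β ∑ i, v i`, that is `∑_β r ≤ 0`, so
`β = ∅` for `c = r`; similarly the inequality for `(α, γᶜ)` gives `γ = ∅`.  Hence `r = 0`.

The charging windows enter only as arbitrary nonempty finite sets of time steps.
-/

/-- The admissible power profiles of one load with set of charging times `A`, maximal rate `p`
and energy bounds `lo`, `hi`. -/
def loadSet {m : ℕ} (A : Finset (Fin m)) (p lo hi : ℝ) : Set (Fin m → ℝ) :=
  {u | (∀ t ∈ A, 0 ≤ u t ∧ u t ≤ p) ∧ (∀ t ∉ A, u t = 0) ∧ lo ≤ ∑ t, u t ∧ ∑ t, u t ≤ hi}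

section SingleLoad

variable {m : ℕ} {A : Finset (Fin m)} {p lo hi : ℝ} {v c : Fin m → ℝ}

lemma loadSet_nonneg (hv : v ∈ loadSet A p lo hi) (t : Fin m) : 0 ≤ v t := by
  by_cases ht : t ∈ A
  · exact (hv.1 t ht).1
  · exact (hv.2.1 t ht).ge

/-- The energy delivered on `β` is delivered on `β ∩ A`. -/
lemma sum_eq_sum_inter (hv : v ∈ loadSet A p lo hi) (β : Finset (Fin m)) :
    ∑ t ∈ β, v t = ∑ t ∈ β ∩ A, v t := by
  refine (Finset.sum_subset Finset.inter_subset_left fun t ht hn => hv.2.1 t ?_).symm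
  exact fun hA => hn (Finset.mem_inter.2 ⟨ht, hA⟩)

lemma sum_le_card_mul (hv : v ∈ loadSet A p lo hi) (β : Finset (Fin m)) :
    ∑ t ∈ β, v t ≤ ((β ∩ A).card : ℝ) * p := by
  rw [sum_eq_sum_inter hv, ← nsmul_eq_mul]
  exact Finset.sum_le_card_nsmul _ _ _ fun t ht => (hv.1 t (Finset.mem_inter.1 ht).2).2

lemma sum_eq_card_mul (hv : v ∈ loadSet A p lo hi) (β : Finset (Fin m))
    (h : ∀ t ∈ β, t ∈ A → v t = p) : ∑ t ∈ β, v t = ((β ∩ A).card : ℝ) * p := by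
  rw [sum_eq_sum_inter hv, ← nsmul_eq_mul]
  exact Finset.sum_eq_card_nsmul fun t ht =>
    h t (Finset.mem_inter.1 ht).1 (Finset.mem_inter.1 ht).2

lemma loadSet_nonempty (hA : A.Nonempty) (h0 : 0 ≤ lo) (hlh : lo ≤ hi)
    (hf : lo ≤ (A.card : ℝ) * p) : (loadSet A p lo hi).Nonempty := by
  have hc : (0 : ℝ) < A.card := by exact_mod_cast hA.card_pos
  -- spread the minimal energy evenly over the charging times
  have hs : ∑ t, (if t ∈ A then lo / A.card else 0) = lo := by
    rw [Finset.sum_ite_mem, Finset.univ_inter, Finset.sum_const, nsmul_eq_mul]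
    field_simp
  refine ⟨fun t => if t ∈ A then lo / A.card else 0, fun t ht => ?_, fun t ht => ?_, ?_, ?_⟩
  · simp only [if_pos ht]
    refine ⟨by positivity, ?_⟩
    rw [div_le_iff₀ hc]
    linarith
  · simp only [if_neg ht]
  · exact hs.ge
  · exact hs.le.trans hlh

lemma loadSet_isCompact : IsCompact (loadSet A p lo hi) := by
  have hsub : loadSet A p lo hi ⊆ Set.Icc (fun _ => 0) (fun _ => max p 0) := by
    refine fun v hv => ⟨fun t => loadSet_nonneg hv t, fun t => ?_⟩
    by_cases ht : t ∈ A
    · exact (hv.1 t ht).2.trans (le_max_left _ _)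
    · exact (hv.2.1 t ht).le.trans (le_max_right _ _)
  refine isCompact_Icc.of_isClosed_subset ?_ hsub
  have hcl : loadSet A p lo hi =
      (⋂ t ∈ A, {u : Fin m → ℝ | 0 ≤ u t ∧ u t ≤ p}) ∩
        ((⋂ t ∈ (Aᶜ : Finset (Fin m)), {u : Fin m → ℝ | u t = 0}) ∩
          ({u | lo ≤ ∑ t, u t} ∩ {u | ∑ t, u t ≤ hi})) := by
    ext u
    simp [loadSet]
  rw [hcl]
  refine IsClosed.inter (isClosed_biInter fun t _ => ?_)
    (IsClosed.inter (isClosed_biInter fun t _ => ?_) (IsClosed.inter ?_ ?_))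
  · exact (isClosed_le continuous_const (continuous_apply t)).inter
      (isClosed_le (continuous_apply t) continuous_const)
  · exact isClosed_eq (by fun_prop) (by fun_prop)
  · exact isClosed_le (by fun_prop) (by fun_prop)
  · exact isClosed_le (by fun_prop) (by fun_prop)

lemma loadSet_convex : Convex ℝ (loadSet A p lo hi) := by
  intro x hx y hy a b ha hb hab
  have hsum : ∑ t, (a • x + b • y) t = a * ∑ t, x t + b * ∑ t, y t := by
    simp [Finset.sum_add_distrib, Finset.mul_sum]
  -- a convex combination of reals in an interval stays in it
  have key : ∀ {l h s t : ℝ}, l ≤ s ∧ s ≤ h → l ≤ t ∧ t ≤ h →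
      l ≤ a * s + b * t ∧ a * s + b * t ≤ h := by
    intro l h s t hs ht
    obtain rfl : a = 1 - b := by linarith
    constructor <;> nlinarith
  refine ⟨fun t ht => ?_, fun t ht => ?_, ?_⟩
  · simpa using key (hx.1 t ht) (hy.1 t ht)
  · simp [hx.2.1 t ht, hy.2.1 t ht]
  · rw [hsum]
    exact key hx.2.2 hy.2.2

/-- Exchange inequality: at a maximiser of `⟨c, ·⟩`, adding power `ε` at time `t` and removing
power `η` at time `s` is not profitable, as long as the result is admissible. -/
lemma exchange (hv : v ∈ loadSet A p lo hi)
    (hmax : ∀ w ∈ loadSet A p lo hi, ∑ t, c t * (w t - v t) ≤ 0)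
    {t s : Fin m} (ht : t ∈ A) (hs : s ∈ A) {ε η : ℝ} (hε : 0 ≤ ε) (hη : 0 ≤ η)
    (htp : v t + ε ≤ p) (hsv : η ≤ v s)
    (hlo : lo ≤ ∑ x, v x + ε - η) (hhi : ∑ x, v x + ε - η ≤ hi) :
    c t * ε - c s * η ≤ 0 := by
  have hsum : ∑ x, (v + Pi.single t ε - Pi.single s η : Fin m → ℝ) x = ∑ x, v x + ε - η := by
    simp [Finset.sum_add_distrib, Finset.sum_sub_distrib]
  have hw : v + Pi.single t ε - Pi.single s η ∈ loadSet A p lo hi := by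
    refine ⟨fun x hx => ?_, fun x hx => ?_, ?_, ?_⟩
    · have := hv.1 x hx
      simp only [Pi.add_apply, Pi.sub_apply, Pi.single_apply]
      constructor <;> split_ifs <;> subst_vars <;> linarith
    · have h1 : x ≠ t := fun h => hx (h ▸ ht)
      have h2 : x ≠ s := fun h => hx (h ▸ hs)
      simp [h1, h2, hv.2.1 x hx]
    · rw [hsum]; exact hlo
    · rw [hsum]; exact hhi
  have := hmax _ hw
  have heq : ∑ x, c x * ((v + Pi.single t ε - Pi.single s η : Fin m → ℝ) x - v x)
      = c t * ε - c s * η := by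
    have : ∀ x, c x * ((v + Pi.single t ε - Pi.single s η : Fin m → ℝ) x - v x)
        = c x * (Pi.single t ε : Fin m → ℝ) x - c x * (Pi.single s η : Fin m → ℝ) x := by
      intro x
      simp only [Pi.add_apply, Pi.sub_apply]
      ring
    rw [Finset.sum_congr rfl fun x _ => this x, Finset.sum_sub_distrib]
    simp [Pi.single_apply]
  linarith

/-- If some charging time in `{c > 0}` is not saturated, a maximiser uses all of its energy budget
and spends none of it outside `{c > 0}`. -/
lemma sum_pos_part_tight (hv : v ∈ loadSet A p lo hi)
    (hmax : ∀ w ∈ loadSet A p lo hi, ∑ t, c t * (w t - v t) ≤ 0)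
    (β : Finset (Fin m)) (hβ : ∀ t, t ∈ β ↔ 0 < c t) :
    ∑ t ∈ β, v t = hi ∨ ∑ t ∈ β, v t = ((β ∩ A).card : ℝ) * p := by
  by_cases hall : ∀ t ∈ β, t ∈ A → v t = p
  · exact Or.inr (sum_eq_card_mul hv β hall)
  left
  push Not at hall
  obtain ⟨t, htβ, htA, htp⟩ := hall
  have hlt : v t < p := lt_of_le_of_ne (hv.1 t htA).2 htp
  have hct := (hβ t).1 htβ
  have hlo := hv.2.2.1
  have hhi := hv.2.2.2
  have hfull : ∑ x, v x = hi := by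
    by_contra hne
    have hlt' : ∑ x, v x < hi := lt_of_le_of_ne hhi hne
    have hε : 0 < min (p - v t) (hi - ∑ x, v x) := lt_min (by linarith) (by linarith)
    have h1 := min_le_left (p - v t) (hi - ∑ x, v x)
    have h2 := min_le_right (p - v t) (hi - ∑ x, v x)
    have := exchange hv hmax htA htA hε.le le_rfl (by linarith) (hv.1 t htA).1
      (by linarith) (by linarith)
    nlinarith [mul_pos hct hε]
  rw [← hfull]
  refine Finset.sum_subset (Finset.subset_univ _) fun s _ hs => ?_
  by_contra hne
  have hsA : s ∈ A := by
    by_contra h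
    exact hne (hv.2.1 s h)
  have hpos : 0 < v s := lt_of_le_of_ne (hv.1 s hsA).1 (Ne.symm hne)
  have hcs : c s ≤ 0 := not_lt.1 fun h => hs ((hβ s).2 h)
  have hε : 0 < min (p - v t) (v s) := lt_min (by linarith) hpos
  have h1 := min_le_left (p - v t) (v s)
  have h2 := min_le_right (p - v t) (v s)
  have := exchange hv hmax htA hsA hε.le hε.le (by linarith) h2 (by linarith) (by linarith)
  nlinarith [mul_pos hct hε, mul_nonneg (neg_nonneg.2 hcs) hε.le]

/-- If some time in `{c < 0}` carries power, a maximiser uses the least possible energy and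
saturates every charging time outside `{c < 0}`. -/
lemma sum_neg_part_tight (hv : v ∈ loadSet A p lo hi)
    (hmax : ∀ w ∈ loadSet A p lo hi, ∑ t, c t * (w t - v t) ≤ 0)
    (γ : Finset (Fin m)) (hγ : ∀ t, t ∈ γ ↔ c t < 0) :
    ∑ t ∈ γ, v t = 0 ∨ ∑ t ∈ γ, v t = lo - ((γᶜ ∩ A).card : ℝ) * p := by
  by_cases hall : ∀ t ∈ γ, v t = 0
  · exact Or.inl (Finset.sum_eq_zero hall)
  right
  push Not at hall
  obtain ⟨s, hsγ, hs0⟩ := hall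
  have hsA : s ∈ A := by
    by_contra h
    exact hs0 (hv.2.1 s h)
  have hpos : 0 < v s := lt_of_le_of_ne (hv.1 s hsA).1 (Ne.symm hs0)
  have hcs := (hγ s).1 hsγ
  have hlo := hv.2.2.1
  have hhi := hv.2.2.2
  have hfull : ∑ x, v x = lo := by
    by_contra hne
    have hlt' : lo < ∑ x, v x := lt_of_le_of_ne hlo (Ne.symm hne)
    have hε : 0 < min (v s) (∑ x, v x - lo) := lt_min hpos (by linarith)
    have h1 := min_le_left (v s) (∑ x, v x - lo)
    have h2 := min_le_right (v s) (∑ x, v x - lo)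
    have := exchange hv hmax hsA hsA le_rfl hε.le (by linarith [(hv.1 s hsA).2]) h1
      (by linarith) (by linarith)
    nlinarith [mul_pos (neg_pos.2 hcs) hε]
  have hsat : ∑ t ∈ γᶜ, v t = ((γᶜ ∩ A).card : ℝ) * p := by
    refine sum_eq_card_mul hv _ fun t htγ htA => ?_
    by_contra hne
    have hlt : v t < p := lt_of_le_of_ne (hv.1 t htA).2 hne
    have hct : 0 ≤ c t := not_lt.1 fun h => (Finset.mem_compl.1 htγ) ((hγ t).2 h)
    have hε : 0 < min (p - v t) (v s) := lt_min (by linarith) hpos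
    have h1 := min_le_left (p - v t) (v s)
    have h2 := min_le_right (p - v t) (v s)
    have := exchange hv hmax htA hsA hε.le hε.le (by linarith) h2 (by linarith) (by linarith)
    nlinarith [mul_pos (neg_pos.2 hcs) hε, mul_nonneg hct hε.le]
  have := Finset.sum_add_sum_compl γ v
  linarith

end SingleLoad

/-- First-order optimality: if `v` minimises the squared norm of `u - ∑ i, v i` over a product of
convex sets, then each `v i` maximises the pairing with the residual over its own set. -/
lemma inner_le_of_minimal {m N : ℕ} {S : Fin N → Set (Fin m → ℝ)} (hS : ∀ i, Convex ℝ (S i))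
    {u : Fin m → ℝ} {v : Fin N → Fin m → ℝ} (hv : ∀ i, v i ∈ S i)
    (hmin : ∀ w : Fin N → Fin m → ℝ, (∀ i, w i ∈ S i) →
      ∑ t, (u t - ∑ i, v i t) ^ 2 ≤ ∑ t, (u t - ∑ i, w i t) ^ 2)
    (i : Fin N) {w : Fin m → ℝ} (hw : w ∈ S i) :
    ∑ t, (u t - ∑ j, v j t) * (w t - v i t) ≤ 0 := by
  set I := ∑ t, (u t - ∑ j, v j t) * (w t - v i t) with hI
  set Q := ∑ t, (w t - v i t) ^ 2 with hQ
  have hQ0 : 0 ≤ Q := Finset.sum_nonneg fun t _ => sq_nonneg _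
  -- moving `v i` a fraction `ε` of the way towards `w` does not decrease the objective
  have key : ∀ ε : ℝ, 0 ≤ ε → ε ≤ 1 → 0 ≤ -(2 * ε * I) + ε ^ 2 * Q := by
    intro ε h0 h1
    have hmem : ∀ j, Function.update v i (v i + ε • (w - v i)) j ∈ S j := by
      intro j
      by_cases hj : j = i
      · subst hj
        rw [Function.update_self]
        exact (hS j).add_smul_sub_mem (hv j) hw ⟨h0, h1⟩
      · rw [Function.update_of_ne hj]
        exact hv j
    have hsum : ∀ t, ∑ j, Function.update v i (v i + ε • (w - v i)) j t
        = ∑ j, v j t + ε * (w t - v i t) := by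
      intro t
      rw [← Finset.add_sum_erase _ _ (Finset.mem_univ i),
        ← Finset.add_sum_erase _ (fun j => v j t) (Finset.mem_univ i), Function.update_self,
        Finset.sum_congr rfl fun j hj => by rw [Function.update_of_ne (Finset.ne_of_mem_erase hj)]]
      simp only [Pi.add_apply, Pi.smul_apply, Pi.sub_apply, smul_eq_mul]
      ring
    have h := hmin _ hmem
    have hexp : ∑ t, (u t - (∑ j, v j t + ε * (w t - v i t))) ^ 2
        = ∑ t, (u t - ∑ j, v j t) ^ 2 + (-(2 * ε * I) + ε ^ 2 * Q) := by
      rw [hI, hQ, Finset.mul_sum, Finset.mul_sum, ← Finset.sum_neg_distrib,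
        ← Finset.sum_add_distrib, ← Finset.sum_add_distrib]
      exact Finset.sum_congr rfl fun t _ => by ring
    simp only [hsum] at h
    linarith
  by_contra hpos
  push Not at hpos
  -- `ε = I / (I + Q)` lies in `(0, 1]` and violates `key`
  have hIQ : 0 < I + Q := by linarith
  have hε : 0 < I / (I + Q) := div_pos hpos hIQ
  have h := key (I / (I + Q)) hε.le ((div_le_one hIQ).2 (by linarith))
  have hmul : I / (I + Q) * (I + Q) = I := div_mul_cancel₀ _ hIQ.ne'
  nlinarith [mul_pos hε hpos, mul_pos hε hε, mul_pos (mul_pos hε hε) hpos]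

/-- Exact characterization of the aggregate flexibility (Theorem 1 of the paper):
`u` belongs to the Minkowski sum of the individual admissible sets iff the family of
inequalities indexed by subsets `α ⊆ {1,…,N}` and `β ⊆ {1,…,m}` holds. -/
theorem exact_characterization_aggregate_flexibility
    (m N : ℕ) (a d : Fin N → Fin m) (p Elo Ehi : Fin N → ℝ)
    (ha : ∀ i, a i < d i) (hp : ∀ i, 0 < p i)
    (hE0 : ∀ i, 0 ≤ Elo i) (hE : ∀ i, Elo i ≤ Ehi i)
    (hfeas : ∀ i, Elo i ≤ ((Finset.Icc (a i) (d i)).card : ℝ) * p i)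
    (P : Fin N → Set (Fin m → ℝ))
    (hP : ∀ i, P i = {u : Fin m → ℝ |
        (∀ t ∈ Finset.Icc (a i) (d i), 0 ≤ u t ∧ u t ≤ p i) ∧
        (∀ t ∉ Finset.Icc (a i) (d i), u t = 0) ∧
        Elo i ≤ ∑ t, u t ∧ ∑ t, u t ≤ Ehi i})
    (u : Fin m → ℝ) :
    (∃ v : Fin N → Fin m → ℝ, (∀ i, v i ∈ P i) ∧ u = ∑ i, v i) ↔
      ∀ (α : Finset (Fin N)) (β : Finset (Fin m)),
        min (∑ i ∈ α, Ehi i - ∑ t ∈ β, u t)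
            (∑ t ∈ βᶜ, u t - ∑ i ∈ αᶜ, Elo i)
          ≥ -∑ i ∈ αᶜ, ((β ∩ Finset.Icc (a i) (d i)).card : ℝ) * p i := by
  obtain rfl : P = fun i => loadSet (Finset.Icc (a i) (d i)) (p i) (Elo i) (Ehi i) :=
    funext hP
  have swap : ∀ (v : Fin N → Fin m → ℝ) (β : Finset (Fin m)),
      ∑ t ∈ β, ∑ i, v i t = ∑ i, ∑ t ∈ β, v i t := fun v β => Finset.sum_comm
  constructor
  · rintro ⟨v, hv, rfl⟩ α β
    simp only [Finset.sum_apply, swap, ge_iff_le]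
    refine le_min ?_ ?_
    · rw [← Finset.sum_add_sum_compl α fun i => ∑ t ∈ β, v i t]
      have h1 : ∑ i ∈ α, ∑ t ∈ β, v i t ≤ ∑ i ∈ α, Ehi i :=
        Finset.sum_le_sum fun i _ =>
          (Finset.sum_le_univ_sum_of_nonneg (loadSet_nonneg (hv i))).trans (hv i).2.2.2
      have h2 : ∑ i ∈ αᶜ, ∑ t ∈ β, v i t
          ≤ ∑ i ∈ αᶜ, ((β ∩ Finset.Icc (a i) (d i)).card : ℝ) * p i :=
        Finset.sum_le_sum fun i _ => sum_le_card_mul (hv i) β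
      linarith
    · rw [← Finset.sum_add_sum_compl α fun i => ∑ t ∈ βᶜ, v i t]
      have h1 : 0 ≤ ∑ i ∈ α, ∑ t ∈ βᶜ, v i t :=
        Finset.sum_nonneg fun i _ => Finset.sum_nonneg fun t _ => loadSet_nonneg (hv i) t
      have h2 : ∑ i ∈ αᶜ, (Elo i - ((β ∩ Finset.Icc (a i) (d i)).card : ℝ) * p i)
          ≤ ∑ i ∈ αᶜ, ∑ t ∈ βᶜ, v i t := by
        refine Finset.sum_le_sum fun i _ => ?_
        have h3 := sum_le_card_mul (hv i) β
        have h4 := Finset.sum_add_sum_compl β (v i)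
        have h5 := (hv i).2.2.1
        linarith
      rw [Finset.sum_sub_distrib] at h2
      linarith
  · intro H
    have hcomp : IsCompact (Set.univ.pi fun i =>
        loadSet (Finset.Icc (a i) (d i)) (p i) (Elo i) (Ehi i)) :=
      isCompact_univ_pi fun i => loadSet_isCompact
    have hne : (Set.univ.pi fun i =>
        loadSet (Finset.Icc (a i) (d i)) (p i) (Elo i) (Ehi i)).Nonempty :=
      Set.univ_pi_nonempty_iff.2 fun i => loadSet_nonempty
        (Finset.nonempty_Icc.2 (ha i).le) (hE0 i) (hE i) (hfeas i)
    obtain ⟨v, hv, hmin⟩ := hcomp.exists_isMinOn hne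
      (f := fun w : Fin N → Fin m → ℝ => ∑ t, (u t - ∑ i, w i t) ^ 2)
      (Continuous.continuousOn (by fun_prop))
    replace hv : ∀ i, v i ∈ loadSet (Finset.Icc (a i) (d i)) (p i) (Elo i) (Ehi i) :=
      fun i => hv i (Set.mem_univ i)
    have hopt := fun i w hw => inner_le_of_minimal (fun i => loadSet_convex) hv
      (fun w hw => hmin (fun i _ => hw i)) i (w := w) hw
    refine ⟨v, hv, ?_⟩
    set r : Fin m → ℝ := fun t => u t - ∑ i, v i t with hr
    have hrsum : ∀ β : Finset (Fin m), ∑ t ∈ β, r t = ∑ t ∈ β, u t - ∑ i, ∑ t ∈ β, v i t := by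
      intro β
      rw [hr, Finset.sum_sub_distrib, swap]
    have hpos : ∀ t, r t ≤ 0 := by
      by_contra! hcon
      obtain ⟨t₀, ht₀⟩ := hcon
      set β : Finset (Fin m) := {t | 0 < r t} with hβ
      have htight := fun i => sum_pos_part_tight (hv i) (hopt i) β (by simp [hβ, hr])
      set α : Finset (Fin N) := {i | ∑ t ∈ β, v i t = Ehi i} with hα
      have h := (H α β).trans (min_le_left _ _)
      have h1 : ∑ i ∈ α, ∑ t ∈ β, v i t = ∑ i ∈ α, Ehi i :=
        Finset.sum_congr rfl fun i hi => by simpa [hα] using hi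
      have h2 : ∑ i ∈ αᶜ, ∑ t ∈ β, v i t
          = ∑ i ∈ αᶜ, ((β ∩ Finset.Icc (a i) (d i)).card : ℝ) * p i :=
        Finset.sum_congr rfl fun i hi => (htight i).resolve_left (by simpa [hα] using hi)
      have h3 := Finset.sum_add_sum_compl α fun i => ∑ t ∈ β, v i t
      have h4 : 0 < ∑ t ∈ β, r t :=
        Finset.sum_pos (fun t ht => by simpa [hβ] using ht) ⟨t₀, by simpa [hβ] using ht₀⟩
      linarith [hrsum β]
    have hneg : ∀ t, 0 ≤ r t := by
      by_contra! hcon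
      obtain ⟨t₀, ht₀⟩ := hcon
      set γ : Finset (Fin m) := {t | r t < 0} with hγ
      have htight := fun i => sum_neg_part_tight (hv i) (hopt i) γ (by simp [hγ, hr])
      set α : Finset (Fin N) := {i | ∑ t ∈ γ, v i t = 0} with hα
      have h := (H α γᶜ).trans (min_le_right _ _)
      rw [compl_compl] at h
      have h1 : ∑ i ∈ α, ∑ t ∈ γ, v i t = 0 :=
        Finset.sum_eq_zero fun i hi => by simpa [hα] using hi
      have h2 : ∑ i ∈ αᶜ, ∑ t ∈ γ, v i t
          = ∑ i ∈ αᶜ, (Elo i - ((γᶜ ∩ Finset.Icc (a i) (d i)).card : ℝ) * p i) :=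
        Finset.sum_congr rfl fun i hi => (htight i).resolve_left (by simpa [hα] using hi)
      rw [Finset.sum_sub_distrib] at h2
      have h3 := Finset.sum_add_sum_compl α fun i => ∑ t ∈ γ, v i t
      have h4 : ∑ t ∈ γ, r t < 0 :=
        Finset.sum_neg (fun t ht => by simpa [hγ] using ht) ⟨t₀, by simpa [hγ] using ht₀⟩
      linarith [hrsum γ]
    funext t
    rw [Finset.sum_apply]
    have h0 : u t - ∑ i, v i t = 0 := le_antisymm (hpos t) (hneg t)
    linarith
end

section
/- Let 𝔅 := { u ∈ ℝ^m : F u ≤ H } be nonempty, where F ∈ ℝ^{k×m} and H ∈ ℝ^k, and let M ∈ ℝ^{n×m}, h ∈ ℝ^n. Then 𝔅 ⊆ { u ∈ ℝ^m : M u ≤ h } if and only if there exists a matrix G ∈ ℝ^{n×k} with all entries nonnegative such that G F = M and G H ≤ h (componentwise). -/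
/-!
The substance is the nonhomogeneous Farkas lemma, applied to one row of `M` at a time.
`farkas_homogeneous` is the homogeneous version for finitely many linear functionals on an
arbitrary real vector space; its inductive proof is purely algebraic, so no closedness of a
finitely generated cone is needed. `farkas_affine` follows by homogenization: the inequality
`c ⬝ᵥ u ≤ d` is replaced by `c ⬝ᵥ u - d * t ≤ 0` on `ℝᵐ × ℝ`, under the constraints
`F u - t H ≤ 0` and `-t ≤ 0`. The points with `t > 0` rescale to points of the polyhedron, and
those with `t = 0` are recession directions, along which `c ⬝ᵥ u` cannot increase because the
polyhedron is nonempty. The multiplier of `-t ≤ 0` is the slack in `G H ≤ h`.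
-/

/-- Homogeneous Farkas lemma. In the induction step, either the first functional is redundant, or
some `y` violates the conclusion while satisfying every other constraint; then `A 0 y > 0`, and
projecting along `y` onto the kernel of `A 0` eliminates that functional. -/
theorem farkas_homogeneous {V : Type*} [AddCommGroup V] [Module ℝ V] :
    ∀ (k : ℕ) (A : Fin k → V →ₗ[ℝ] ℝ) (c : V →ₗ[ℝ] ℝ),
      (∀ x, (∀ i, A i x ≤ 0) → c x ≤ 0) →
      ∃ w : Fin k → ℝ, (∀ i, 0 ≤ w i) ∧ ∀ x, c x = ∑ i, w i * A i x := by
  intro k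
  induction k with
  | zero =>
    intro A c hc
    refine ⟨0, fun i => i.elim0, fun x => ?_⟩
    have h1 := hc x (fun i => i.elim0)
    have h2 := hc (-x) (fun i => i.elim0)
    rw [map_neg] at h2
    simp only [Finset.univ_eq_empty, Finset.sum_empty]
    linarith
  | succ k ih =>
    intro A c hc
    by_cases hred : ∀ x, (∀ i : Fin k, A i.succ x ≤ 0) → c x ≤ 0
    · obtain ⟨w, hw, hwc⟩ := ih (fun i => A i.succ) c hred
      refine ⟨Fin.cons 0 w, Fin.cases (by simp) (by simpa using hw), fun x => ?_⟩
      simp [Fin.sum_univ_succ, hwc x]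
    · push Not at hred
      obtain ⟨y₀, hy₀, hcy₀⟩ := hred
      have hpos : 0 < A 0 y₀ := by
        by_contra hle
        exact absurd (hc y₀ (Fin.cases (not_lt.mp hle) hy₀)) (not_le.mpr hcy₀)
      -- Normalize the witness so that `A 0 y = 1`.
      obtain ⟨y, hy1, hy, hcy⟩ : ∃ y, A 0 y = 1 ∧ (∀ i : Fin k, A i.succ y ≤ 0) ∧ 0 < c y := by
        refine ⟨(A 0 y₀)⁻¹ • y₀, ?_, fun i => ?_, ?_⟩
        · simp [hpos.ne']
        · rw [map_smul, smul_eq_mul]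
          exact mul_nonpos_of_nonneg_of_nonpos (inv_pos.mpr hpos).le (hy₀ i)
        · rw [map_smul, smul_eq_mul]
          exact mul_pos (inv_pos.mpr hpos) hcy₀
      obtain ⟨w, hw, hwc⟩ := ih (fun i => A i.succ - A i.succ y • A 0) (c - c y • A 0) (by
        intro x hx
        have key := hc (x - A 0 x • y) (Fin.cases (by simp [hy1]) (fun i => by
          have := hx i
          simp only [LinearMap.sub_apply, LinearMap.smul_apply, smul_eq_mul] at this
          simp only [map_sub, map_smul, smul_eq_mul]
          linarith))
        simp only [map_sub, map_smul, smul_eq_mul] at key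
        simp only [LinearMap.sub_apply, LinearMap.smul_apply, smul_eq_mul]
        linarith)
      refine ⟨Fin.cons (c y - ∑ i, w i * A i.succ y) w, ?_, fun x => ?_⟩
      · refine Fin.cases ?_ (by simpa using hw)
        have : ∑ i, w i * A i.succ y ≤ 0 :=
          Finset.sum_nonpos fun i _ => mul_nonpos_of_nonneg_of_nonpos (hw i) (hy i)
        simp only [Fin.cons_zero]
        linarith
      · have := hwc x
        simp only [LinearMap.sub_apply, LinearMap.smul_apply, smul_eq_mul, mul_sub,
          Finset.sum_sub_distrib, ← mul_assoc, ← Finset.sum_mul] at this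
        simp only [Fin.sum_univ_succ, Fin.cons_zero, Fin.cons_succ]
        linarith

open scoped Matrix in
/-- Farkas lemma for an inequality `c ⬝ᵥ u ≤ d` implied by a consistent system `F u ≤ H`. -/
theorem farkas_affine {m k : ℕ} (F : Matrix (Fin k) (Fin m) ℝ) (H : Fin k → ℝ)
    (c : Fin m → ℝ) (d : ℝ) (hne : ∃ u : Fin m → ℝ, F *ᵥ u ≤ H)
    (hcd : ∀ u : Fin m → ℝ, F *ᵥ u ≤ H → c ⬝ᵥ u ≤ d) :
    ∃ g : Fin k → ℝ, (∀ j, 0 ≤ g j) ∧ g ᵥ* F = c ∧ g ⬝ᵥ H ≤ d := by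
  -- `L a b` is the functional `(u, t) ↦ a ⬝ᵥ u - b * t` on the homogenized space.
  let L : (Fin m → ℝ) → ℝ → ((Fin m → ℝ) × ℝ) →ₗ[ℝ] ℝ := fun a b =>
    (dotProductBilin ℝ ℝ a).comp (LinearMap.fst ℝ _ _) - b • LinearMap.snd ℝ _ _
  have hL : ∀ a b u t, L a b (u, t) = a ⬝ᵥ u - b * t := fun a b u t => by simp [L]
  obtain ⟨w, hw, hwc⟩ := farkas_homogeneous (k + 1)
    (Fin.cons (L 0 1) fun j => L (F j) (H j)) (L c d) (by
      rintro ⟨u, t⟩ hx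
      have ht : 0 ≤ t := by simpa [hL] using hx 0
      have hu : ∀ j, F j ⬝ᵥ u ≤ H j * t := fun j => by simpa [hL] using hx j.succ
      rw [hL]
      rcases ht.eq_or_lt with rfl | ht
      · obtain ⟨u₀, hu₀⟩ := hne
        have ray : ∀ s : ℝ, 0 ≤ s → c ⬝ᵥ u₀ + s * (c ⬝ᵥ u) ≤ d := fun s hs => by
          have := hcd (u₀ + s • u) (fun j => by
            have h0 : F j ⬝ᵥ u₀ ≤ H j := hu₀ j
            have h1 := hu j
            change F j ⬝ᵥ (u₀ + s • u) ≤ H j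
            rw [dotProduct_add, dotProduct_smul, smul_eq_mul]
            nlinarith)
          simpa [dotProduct_add, dotProduct_smul] using this
        by_contra! hlt
        have hlt' : 0 < c ⬝ᵥ u := by simpa using hlt
        have hd := ray 0 le_rfl
        -- This value of `s` makes the left-hand side of `ray s` equal to `d + 1`.
        have := ray ((d - c ⬝ᵥ u₀ + 1) / (c ⬝ᵥ u)) (div_nonneg (by linarith) hlt'.le)
        rw [div_mul_cancel₀ _ hlt'.ne'] at this
        linarith
      · have := hcd (t⁻¹ • u) (fun j => by
          change F j ⬝ᵥ (t⁻¹ • u) ≤ H j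
          rw [dotProduct_smul, smul_eq_mul, inv_mul_le_iff₀ ht, mul_comm]
          exact hu j)
        rw [dotProduct_smul, smul_eq_mul, inv_mul_le_iff₀ ht] at this
        linarith)
  simp only [Fin.sum_univ_succ, Fin.cons_zero, Fin.cons_succ, Prod.forall, hL] at hwc
  refine ⟨fun j => w j.succ, fun j => hw _, ?_, ?_⟩
  · ext i
    have := hwc (Pi.single i 1) 0
    simp only [dotProduct_single_one, mul_zero, sub_zero, Pi.zero_apply, zero_add] at this
    exact this.symm
  · have h1 := hwc 0 1
    have h0 := hw 0
    simp only [dotProduct_zero, mul_one, zero_sub, mul_neg, Finset.sum_neg_distrib] at h1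
    simp only [dotProduct]
    linarith

/-- Polytope inclusion via Farkas: for a nonempty polytope `𝔅 = {u : F u ≤ H}`,
the inclusion `𝔅 ⊆ {u : M u ≤ h}` holds iff there exists an entrywise nonnegative
matrix `G` with `G F = M` and `G H ≤ h`. -/
theorem polytope_inclusion_iff_farkas
    (m k n : ℕ) (F : Matrix (Fin k) (Fin m) ℝ) (H : Fin k → ℝ)
    (M : Matrix (Fin n) (Fin m) ℝ) (h : Fin n → ℝ)
    (hne : ∃ u : Fin m → ℝ, F.mulVec u ≤ H) :
    {u : Fin m → ℝ | F.mulVec u ≤ H} ⊆ {u : Fin m → ℝ | M.mulVec u ≤ h} ↔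
      ∃ G : Matrix (Fin n) (Fin k) ℝ,
        (∀ i j, 0 ≤ G i j) ∧ G * F = M ∧ G.mulVec H ≤ h := by
  constructor
  · intro hsub
    choose g hg hgF hgH using fun i => farkas_affine F H (M i) (h i) hne
      (fun u hu => hsub hu i)
    exact ⟨g, hg, funext fun i => hgF i, fun i => hgH i⟩
  · rintro ⟨G, hG, rfl, hGH⟩ u hu i
    refine le_trans ?_ (hGH i)
    rw [← Matrix.mulVec_mulVec]
    simp only [Matrix.mulVec, dotProduct]
    exact Finset.sum_le_sum fun j _ => mul_le_mul_of_nonneg_left (hu j) (hG i j)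
end

section
/- Let 𝔅 ⊆ ℝ^m, let λ_k > 0 and μ_k ∈ ℝ^m for k = 1,…,K, and set λ := ∑_{k=1}^K λ_k and μ := ∑_{k=1}^K μ_k. If u ∈ λ·𝔅 + μ, then the group dispatch profiles z_k := (λ_k/λ)(u − μ) + μ_k satisfy z_k ∈ λ_k·𝔅 + μ_k for every k, and ∑_{k=1}^K z_k = u. -/
/-!
Writing `u = λ x + μ` with `x ∈ 𝔅`, the profile `z_k` is the image `λ_k x + μ_k` of the same
point `x`, so it lies in the `k`-th homothet, and these images add up to `λ x + μ = u`.
-/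

open Pointwise

open Finset

/-- Group dispatch: if `u ∈ λ·𝔅 + μ` with `λ = ∑ λ_k`, `μ = ∑ μ_k` and `λ_k > 0`, then
the profiles `z_k = (λ_k/λ)(u − μ) + μ_k` satisfy `z_k ∈ λ_k·𝔅 + μ_k` and `∑ z_k = u`. -/
theorem group_dispatch
    (m K : ℕ) (Bs : Set (Fin m → ℝ)) (l : Fin K → ℝ) (μ : Fin K → Fin m → ℝ)
    (hl : ∀ k, 0 < l k) (u : Fin m → ℝ)
    (hu : u ∈ (∑ k, l k) • Bs + {∑ k, μ k}) :
    (∀ k, (l k / ∑ j, l j) • (u - ∑ j, μ j) + μ k ∈ l k • Bs + {μ k}) ∧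
    (∑ k, ((l k / ∑ j, l j) • (u - ∑ j, μ j) + μ k)) = u := by
  obtain ⟨v, ⟨x, hx, rfl⟩, w, hw, rfl⟩ := hu
  obtain rfl := Set.mem_singleton_iff.mp hw
  -- Here `u = λ x + μ` with `x ∈ 𝔅`, and each profile is `z_k = λ_k x + μ_k`.
  have hz : ∀ k, (l k / ∑ j, l j) • ((∑ j, l j) • x + ∑ j, μ j - ∑ j, μ j) + μ k
      = l k • x + μ k := by
    intro k
    -- An index `k` makes the total weight positive; for `K = 0` it is zero.
    have hpos : 0 < ∑ j, l j := Finset.sum_pos (fun j _ => hl j) ⟨k, Finset.mem_univ k⟩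
    rw [add_sub_cancel_right, smul_smul, div_mul_cancel₀ _ hpos.ne']
  refine ⟨fun k => ?_, ?_⟩
  · exact (hz k).symm ▸ Set.add_mem_add (Set.smul_mem_smul_set hx) (Set.mem_singleton _)
  · exact (Finset.sum_congr rfl fun k _ => hz k).trans
      (by simp only [Finset.sum_add_distrib, Finset.sum_smul])
end
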